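/- arXiv:1701.02804 — 2 statements merged into one kernel-verified Lean document; each statement's English description precedes it below -/
import Mathlib

section
/- Let 𝓘 be the dyadic interval set. Fix n ≥ 1, a convex set Θ ⊆ ℝ^n, T ≥ 1, and convex loss functions ℓ_t : Θ → ℝ for t = 1, …, T. For each I ∈ 𝓘 let (θ_t(I))_{t∈I} ⊆ Θ be the output sequence of a learner, and suppose there is a constant C > 0 such that for every I ∈ 𝓘 and every comparator sequence (θ_t)_{t∈I} ⊆ Θ one has Σ_{t∈I} (ℓ_t(θ_t(I)) − ℓ_t(θ_t)) ≤ C(1 + γ(I))√|I|, where γ(I) = Σ_{t∈I} ‖θ_{t+1} − θ_t‖. Define η_I = min{1/2, 1/√|I|} and ACT(t) = {I ∈ 𝓘 : t ∈ I}, and define weights recursively: for I = [q,s] ∈ 𝓘, w_q(I) = η_I and w_{t+1}(I) = w_t(I)(1 + η_I r_t(I)) for q ≤ t ≤ s, where the ensemble estimate is θ̂_t = (Σ_{I∈ACT(t)} w_t(I) θ_t(I)) / (Σ_{I∈ACT(t)} w_t(I)) and the estimated regret is r_t(I) = ℓ_t(θ̂_t) − ℓ_t(θ_t(I)). Assume |r_t(I)|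 ≤ 1 for all t and all I ∈ ACT(t). Then for every interval I = [q,s] ⊆ [1,T] and every comparator sequence (θ_t)_{t∈I} ⊆ Θ: Σ_{t∈I} (ℓ_t(θ̂_t) − ℓ_t(θ_t)) ≤ 8C(1 + γ(I))√|I| + 40 ln(s+1) √|I|. -/
open Finset

/-!
The proof has two independent parts.

*Meta-regret.* Put `Φ t = ∑_{I ∈ ACT t} w_t(I) / η_I`. By convexity `∑_I w_t(I) r_t(I) ≤ 0`, so the
multiplicative update does not increase this sum (`potential_step`); passing from `t` to `t + 1`
only adds a term `1` for each of the at most `t + 1` intervals that start at `t + 1`. Hence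
`Φ t ≤ t²`, also after the update (`potential_le`). On the other hand `1 + x ≥ exp (x - x²)` for `|x| ≤ 1/2` gives
`w(I) / η_I ≥ exp (η_I ∑ r - |I| η_I²)` at the end of `I`. Comparing the two and taking logarithms
bounds the regret against each dyadic learner by `√|I| (1 + 4 log (s + 1)) ≤ 8 log (s + 1) √|I|`
(`meta_regret`).

*Dyadic decomposition.* If `∑_{t ∈ J} f t ≤ A √|J|` for all dyadic `J ⊆ [q, s]`, then
`∑_{t = q}^s f t ≤ 5 A √(s - q + 1)` (`sum_le_of_dyadic`). Let `2^j ≤ s - q + 1 < 2^(j+1)` and split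
`[q, s]` at the first multiple of `2^j` that is at least `q`; each side is peeled off by dyadic
intervals of decreasing length, and `√a + (5/2) √b ≤ (5/2) √(a + b)` for `b ≤ a` keeps
the constant `5/2` through the induction.

The theorem follows with `A = C (1 + γ) + 8 log (s + 1)`, since `5 ≤ 8` and `5 * 8 = 40`.
-/

/-- The dyadic interval indexed by `(j, k)` (with `k ≥ 1`):
the integer interval `[k·2^j, (k+1)·2^j − 1]`, which has `2^j` elements. -/
def dyadicI (j k : ℕ) : Finset ℕ := Finset.Icc (k * 2 ^ j) ((k + 1) * 2 ^ j - 1)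

/-- `ACT t`: the (indices of the) dyadic intervals containing `t`.  Any dyadic
interval `(j, k)` containing `t ≥ 1` has `j ≤ log₂ t` and `1 ≤ k ≤ t`, so this
finite set is exactly `{I ∈ 𝓘 : t ∈ I}`. -/
def ACT (t : ℕ) : Finset (ℕ × ℕ) :=
  ((Finset.Iic (Nat.log 2 t)) ×ˢ (Finset.Icc 1 t)).filter fun p => t ∈ dyadicI p.1 p.2

/-- The OCELAD learning rate of a dyadic interval of length `2^j`:
`η_I = min {1/2, 1/√|I|}`. -/
noncomputable def ηI (j : ℕ) : ℝ := min (1 / 2) (1 / Real.sqrt (2 ^ j))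

/-! ### Dyadic intervals -/

theorem dyadicI_eq_Ico (j k : ℕ) : dyadicI j k = Finset.Ico (k * 2 ^ j) ((k + 1) * 2 ^ j) := by
  have h : 0 < (k + 1) * 2 ^ j := by positivity
  ext t
  simp only [dyadicI, Finset.mem_Icc, Finset.mem_Ico]
  omega

theorem mem_ACT {t j k : ℕ} :
    (j, k) ∈ ACT t ↔ 1 ≤ k ∧ k * 2 ^ j ≤ t ∧ t < (k + 1) * 2 ^ j := by
  simp only [ACT, Finset.mem_filter, Finset.mem_product, Finset.mem_Iic, Finset.mem_Icc,
    dyadicI_eq_Ico, Finset.mem_Ico]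
  constructor
  · tauto
  · rintro ⟨hk, h1, h2⟩
    have hp : 1 ≤ 2 ^ j := Nat.one_le_two_pow
    refine ⟨⟨Nat.le_log_of_pow_le (by norm_num) (by nlinarith), hk, by nlinarith⟩, h1, h2⟩

theorem card_ACT_le (t : ℕ) : (ACT t).card ≤ t := by
  refine (Finset.card_le_card_of_injOn (t := Finset.range t) Prod.fst ?_ ?_).trans_eq
    (Finset.card_range t)
  · rintro ⟨j, k⟩ h
    obtain ⟨hk, h1, -⟩ := mem_ACT.1 h
    have hj : j < 2 ^ j := Nat.lt_two_pow_self
    simp only [Finset.coe_range, Set.mem_Iio]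
    nlinarith
  · rintro ⟨j, k⟩ h ⟨j', k'⟩ h' hj
    obtain ⟨-, h1, h2⟩ := mem_ACT.1 h
    obtain ⟨-, h1', h2'⟩ := mem_ACT.1 h'
    obtain rfl : j = j' := hj
    have a : k < k' + 1 := Nat.lt_of_mul_lt_mul_right (h1.trans_lt h2')
    have b : k' < k + 1 := Nat.lt_of_mul_lt_mul_right (h1'.trans_lt h2)
    congr 1
    omega

/-- The constant `5/2` survives peeling off the longer part of an interval. -/
theorem sqrt_peel {a b : ℝ} (hb : 0 ≤ b) (hab : b ≤ a) :
    √a + 5 / 2 * √b ≤ 5 / 2 * √(a + b) := by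
  have hle : √b ≤ √a := Real.sqrt_le_sqrt hab
  have h0 : 0 ≤ √b := Real.sqrt_nonneg b
  have ha2 : √a ^ 2 = a := Real.sq_sqrt (hb.trans hab)
  have hb2 : √b ^ 2 = b := Real.sq_sqrt hb
  have hab2 : √(a + b) ^ 2 = a + b := Real.sq_sqrt (by linarith)
  refine abs_le_of_sq_le_sq' ?_ (by positivity) |>.2
  nlinarith

/-- Intervals starting at a multiple of `2^(j-1)` and shorter than `2^j`; the divisibility is
phrased as `2^j ∣ 2p` so that the induction can start at `j = 0`. -/
theorem sum_rightward_le (f : ℕ → ℝ) (A : ℝ) (hA : 0 ≤ A) (q s : ℕ) (hq : 1 ≤ q)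
    (hf : ∀ j k, 1 ≤ k → q ≤ k * 2 ^ j → (k + 1) * 2 ^ j ≤ s + 1 →
      ∑ t ∈ Finset.Ico (k * 2 ^ j) ((k + 1) * 2 ^ j), f t ≤ A * √((2 : ℝ) ^ j)) (j : ℕ) :
    ∀ p m : ℕ, 2 ^ j ∣ 2 * p → m < 2 ^ j → q ≤ p → p + m ≤ s + 1 →
      ∑ t ∈ Finset.Ico p (p + m), f t ≤ 5 / 2 * (A * √(m : ℝ)) := by
  induction j with
  | zero =>
    intro p m _ hm _ _
    obtain rfl : m = 0 := by simpa using hm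
    simp
  | succ j ih =>
    intro p m hp hm hqp hps
    have hp' : 2 ^ j ∣ p := by
      rw [pow_succ'] at hp
      exact Nat.dvd_of_mul_dvd_mul_left (by norm_num) hp
    rcases lt_or_ge m (2 ^ j) with hlt | hge
    · exact ih p m (hp'.mul_left 2) hlt hqp hps
    · obtain ⟨b, rfl⟩ := Nat.exists_eq_add_of_le hge
      obtain ⟨k, rfl⟩ := hp'
      have hb : b < 2 ^ j := by rw [pow_succ] at hm; omega
      have hk : 1 ≤ k := by
        rcases Nat.eq_zero_or_pos k with rfl | h
        · simp at hqp; omega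
        · exact h
      have h1 := hf j k hk (by rw [mul_comm]; exact hqp) (by rw [add_mul, mul_comm k]; omega)
      have h2 := ih (2 ^ j * k + 2 ^ j) b
        (Dvd.dvd.mul_left ((dvd_mul_right _ _).add dvd_rfl) 2) hb (by omega) (by omega)
      rw [add_mul, one_mul, mul_comm k] at h1
      rw [← add_assoc, ← Finset.sum_Ico_consecutive f (n := 2 ^ j * k + 2 ^ j)
        (by omega) (by omega)]
      have h3 := sqrt_peel (a := (2 : ℝ) ^ j) (b := b) (by positivity) (by exact_mod_cast hb.le)
      push_cast
      nlinarith

/-- Mirror image of `sum_rightward_le`. -/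
theorem sum_leftward_le (f : ℕ → ℝ) (A : ℝ) (hA : 0 ≤ A) (q s : ℕ) (hq : 1 ≤ q)
    (hf : ∀ j k, 1 ≤ k → q ≤ k * 2 ^ j → (k + 1) * 2 ^ j ≤ s + 1 →
      ∑ t ∈ Finset.Ico (k * 2 ^ j) ((k + 1) * 2 ^ j), f t ≤ A * √((2 : ℝ) ^ j)) (j : ℕ) :
    ∀ p m : ℕ, 2 ^ j ∣ 2 * (p + m) → m < 2 ^ j → q ≤ p → p + m ≤ s + 1 →
      ∑ t ∈ Finset.Ico p (p + m), f t ≤ 5 / 2 * (A * √(m : ℝ)) := by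
  induction j with
  | zero =>
    intro p m _ hm _ _
    obtain rfl : m = 0 := by simpa using hm
    simp
  | succ j ih =>
    intro p m hp hm hqp hps
    have hp' : 2 ^ j ∣ p + m := by
      rw [pow_succ'] at hp
      exact Nat.dvd_of_mul_dvd_mul_left (by norm_num) hp
    rcases lt_or_ge m (2 ^ j) with hlt | hge
    · exact ih p m (hp'.mul_left 2) hlt hqp hps
    · obtain ⟨b, rfl⟩ := Nat.exists_eq_add_of_le hge
      have hb : b < 2 ^ j := by rw [pow_succ] at hm; omega
      have hd : 2 ^ j ∣ p + b := by
        have : p + (2 ^ j + b) = (p + b) + 2 ^ j := by ring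
        rw [this] at hp'
        exact (Nat.dvd_add_left dvd_rfl).1 hp'
      have h2 := ih p b (hd.mul_left 2) hb hqp (by omega)
      obtain ⟨k, hk'⟩ := hd
      have hk : 1 ≤ k := by
        rcases Nat.eq_zero_or_pos k with rfl | h
        · simp at hk'; omega
        · exact h
      have h1 := hf j k hk (by rw [mul_comm]; omega) (by rw [add_mul, mul_comm k]; omega)
      rw [add_mul, one_mul, mul_comm k, ← hk'] at h1
      have he : p + (2 ^ j + b) = (p + b) + 2 ^ j := by ring
      rw [he, ← Finset.sum_Ico_consecutive f (n := p + b) (by omega) (by omega)]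
      have h3 := sqrt_peel (a := (2 : ℝ) ^ j) (b := b) (by positivity) (by exact_mod_cast hb.le)
      push_cast
      nlinarith

theorem sum_le_of_dyadic (f : ℕ → ℝ) (A : ℝ) (hA : 0 ≤ A) (q s : ℕ) (hq : 1 ≤ q) (hqs : q ≤ s)
    (hf : ∀ j k, 1 ≤ k → q ≤ k * 2 ^ j → (k + 1) * 2 ^ j ≤ s + 1 →
      ∑ t ∈ Finset.Ico (k * 2 ^ j) ((k + 1) * 2 ^ j), f t ≤ A * √((2 : ℝ) ^ j)) :
    ∑ t ∈ Finset.Icc q s, f t ≤ 5 * (A * √((s : ℝ) - q + 1)) := by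
  have hL : s + 1 - q ≠ 0 := by omega
  obtain ⟨j, hj⟩ : ∃ j, j = Nat.log 2 (s + 1 - q) := ⟨_, rfl⟩
  have hlo : 2 ^ j ≤ s + 1 - q := hj ▸ Nat.pow_log_le_self 2 hL
  have hhi : s + 1 - q < 2 ^ (j + 1) := hj ▸ Nat.lt_pow_succ_log_self (by norm_num) _
  -- the first multiple of `2 ^ j` that is at least `q`
  obtain ⟨a, ha, had⟩ : ∃ a, a < 2 ^ j ∧ 2 ^ j ∣ q + a := by
    have hpos : 0 < 2 ^ j := by positivity
    have hdm := Nat.div_add_mod (q + (2 ^ j - 1)) (2 ^ j)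
    have hlt := Nat.mod_lt (q + (2 ^ j - 1)) hpos
    refine ⟨2 ^ j - 1 - (q + (2 ^ j - 1)) % 2 ^ j, by omega, (q + (2 ^ j - 1)) / 2 ^ j, by omega⟩
  obtain ⟨b, hb⟩ := Nat.exists_eq_add_of_le (show q + a ≤ s + 1 by omega)
  have h1 := sum_leftward_le f A hA q s hq hf j q a (had.mul_left 2) ha le_rfl (by omega)
  have h2 := sum_rightward_le f A hA q s hq hf (j + 1) (q + a) b
    (by rw [pow_succ']; exact mul_dvd_mul_left 2 had) (by omega) (by omega) (by omega)
  have hI : Finset.Icc q s = Finset.Ico q (q + a + b) := by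
    ext t; simp only [Finset.mem_Icc, Finset.mem_Ico]; omega
  rw [hI, ← Finset.sum_Ico_consecutive f (n := q + a) (by omega) (by omega)]
  have hc : (s : ℝ) - q + 1 = a + b := by
    have : (s : ℝ) + 1 = q + a + b := by exact_mod_cast hb
    linarith
  rw [hc]
  have ha' : √(a : ℝ) ≤ √((a : ℝ) + b) := Real.sqrt_le_sqrt (by simp)
  have hb' : √(b : ℝ) ≤ √((a : ℝ) + b) := Real.sqrt_le_sqrt (by simp)
  nlinarith

/-! ### Regret of the ensemble against the dyadic learners -/

theorem ηI_pos (j : ℕ) : 0 < ηI j := by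
  unfold ηI; positivity

theorem ηI_le_half (j : ℕ) : ηI j ≤ 1 / 2 := min_le_left _ _

theorem ηI_mul_le (j : ℕ) : ηI j * 2 ^ j ≤ √((2 : ℝ) ^ j) := by
  have hs : 0 < √((2 : ℝ) ^ j) := by positivity
  have h2 : √((2 : ℝ) ^ j) * √((2 : ℝ) ^ j) = 2 ^ j := Real.mul_self_sqrt (by positivity)
  have h : ηI j * √((2 : ℝ) ^ j) ≤ 1 := by
    rw [← le_div_iff₀ hs]; exact min_le_right _ _
  nlinarith

theorem one_div_ηI_le (j : ℕ) : 1 ≤ ηI j * (2 * √((2 : ℝ) ^ j)) := by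
  have hs : 0 < √((2 : ℝ) ^ j) := by positivity
  have h1 : 1 ≤ √((2 : ℝ) ^ j) := Real.one_le_sqrt.2 (one_le_pow₀ (by norm_num))
  rw [← div_le_iff₀ (by positivity)]
  refine le_min ?_ ?_
  · exact one_div_le_one_div_of_le (by norm_num) (by linarith)
  · exact one_div_le_one_div_of_le hs (by linarith)

theorem exp_sub_sq_le {x : ℝ} (hx : |x| ≤ 1 / 2) : Real.exp (x - x ^ 2) ≤ 1 + x := by
  obtain ⟨h1, h2⟩ := abs_le.1 hx
  have key : 1 ≤ (1 + x) * Real.exp (-(x - x ^ 2)) := by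
    rcases le_total 0 x with h | h
    · have := Real.add_one_le_exp (-(x - x ^ 2))
      have h3 : 0 ≤ x ^ 3 := by positivity
      nlinarith
    · have hu : 0 ≤ -(x - x ^ 2) := by nlinarith
      have := Real.quadratic_le_exp_of_nonneg hu
      refine le_trans ?_ (mul_le_mul_of_nonneg_left this (by linarith))
      -- the difference of the two sides is `x² ((1 - x)² (1 + x) + 2 x) / 2`
      have h4 : 0 ≤ (1 - x) ^ 2 * (1 + x) + 2 * x := by
        nlinarith [mul_nonneg (sub_nonneg.2 h1) (neg_nonneg.2 h),
          mul_nonneg (mul_nonneg (sub_nonneg.2 h1) (neg_nonneg.2 h)) (neg_nonneg.2 h)]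
      nlinarith [mul_nonneg (sq_nonneg x) h4]
  rw [Real.exp_neg] at key
  rwa [← div_eq_mul_inv, one_le_div (Real.exp_pos _)] at key

section Weights

variable {w r : ℕ × ℕ → ℕ → ℝ}

/-- Lower bound for the weight after `m` steps; in particular weights stay positive. -/
theorem weight_lower
    (hw_init : ∀ j k, 1 ≤ k → w (j, k) (k * 2 ^ j) = ηI j)
    (hw_rec : ∀ j k, 1 ≤ k → ∀ t ∈ dyadicI j k,
      w (j, k) (t + 1) = w (j, k) t * (1 + ηI j * r (j, k) t))
    (hrbound : ∀ t, 1 ≤ t → ∀ I ∈ ACT t, |r I t| ≤ 1)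
    (j k : ℕ) (hk : 1 ≤ k) (m : ℕ) (hm : m ≤ 2 ^ j) :
    ηI j * Real.exp (ηI j * ∑ t ∈ Finset.Ico (k * 2 ^ j) (k * 2 ^ j + m), r (j, k) t
      - m * ηI j ^ 2) ≤ w (j, k) (k * 2 ^ j + m) := by
  induction m with
  | zero => simp [hw_init j k hk]
  | succ m ih =>
    have hη := ηI_pos j
    have hη2 := ηI_le_half j
    have hpos : 1 ≤ k * 2 ^ j := Nat.mul_pos hk (by positivity)
    have hlt : k * 2 ^ j + m < (k + 1) * 2 ^ j := by rw [add_mul]; omega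
    have hr1 := hrbound (k * 2 ^ j + m) (by omega) (j, k)
      (mem_ACT.2 ⟨hk, by omega, hlt⟩)
    set x := r (j, k) (k * 2 ^ j + m) with hxdef
    have hx : |ηI j * x| ≤ 1 / 2 := by
      rw [abs_mul, abs_of_pos hη]; nlinarith [abs_nonneg x]
    have hx2 : x ^ 2 ≤ 1 := by rw [← sq_abs]; nlinarith [abs_nonneg x]
    have he : Real.exp (ηI j * x - ηI j ^ 2) ≤ 1 + ηI j * x := by
      refine le_trans (Real.exp_le_exp.2 ?_) (exp_sub_sq_le hx)
      nlinarith [mul_le_mul_of_nonneg_left hx2 (sq_nonneg (ηI j))]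
    have ih' := ih (by omega)
    rw [← add_assoc, hw_rec j k hk _ (by rw [dyadicI_eq_Ico, Finset.mem_Ico]; omega),
      Finset.sum_Ico_succ_top (by omega), ← hxdef]
    have hsplit : ∀ S : ℝ, ηI j * (S + x) - ((m + 1 : ℕ) : ℝ) * ηI j ^ 2
        = (ηI j * S - m * ηI j ^ 2) + (ηI j * x - ηI j ^ 2) := by
      intro S; push_cast; ring
    rw [hsplit, Real.exp_add, ← mul_assoc]
    exact mul_le_mul ih' he (Real.exp_pos _).le ((by positivity : (0 : ℝ) ≤ _).trans ih')

theorem weight_pos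
    (hw_init : ∀ j k, 1 ≤ k → w (j, k) (k * 2 ^ j) = ηI j)
    (hw_rec : ∀ j k, 1 ≤ k → ∀ t ∈ dyadicI j k,
      w (j, k) (t + 1) = w (j, k) t * (1 + ηI j * r (j, k) t))
    (hrbound : ∀ t, 1 ≤ t → ∀ I ∈ ACT t, |r I t| ≤ 1)
    (j k : ℕ) (hk : 1 ≤ k) (t : ℕ) (h1 : k * 2 ^ j ≤ t) (h2 : t ≤ (k + 1) * 2 ^ j) :
    0 < w (j, k) t := by
  obtain ⟨m, rfl⟩ := Nat.exists_eq_add_of_le h1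
  refine lt_of_lt_of_le ?_ (weight_lower hw_init hw_rec hrbound j k hk m
    (by rw [add_mul] at h2; omega))
  have := ηI_pos j
  positivity

theorem potential_step
    (hw_rec : ∀ j k, 1 ≤ k → ∀ t ∈ dyadicI j k,
      w (j, k) (t + 1) = w (j, k) t * (1 + ηI j * r (j, k) t))
    (t : ℕ) (hneg : ∑ I ∈ ACT t, w I t * r I t ≤ 0) :
    ∑ I ∈ ACT t, w I (t + 1) / ηI I.1 ≤ ∑ I ∈ ACT t, w I t / ηI I.1 := by
  have h : ∑ I ∈ ACT t, w I (t + 1) / ηI I.1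
      = ∑ I ∈ ACT t, w I t / ηI I.1 + ∑ I ∈ ACT t, w I t * r I t := by
    rw [← Finset.sum_add_distrib]
    refine Finset.sum_congr rfl ?_
    rintro ⟨j, k⟩ hI
    obtain ⟨hk, h1, h2⟩ := mem_ACT.1 hI
    rw [hw_rec j k hk t (by rw [dyadicI_eq_Ico, Finset.mem_Ico]; exact ⟨h1, h2⟩)]
    have := (ηI_pos j).ne'
    field_simp
  linarith

/-- The potential over the intervals active at `t`, with the weights already updated to `t + 1`;
this form covers the final weight of an interval ending at `t`. -/
theorem potential_le
    (hw_init : ∀ j k, 1 ≤ k → w (j, k) (k * 2 ^ j) = ηI j)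
    (hw_rec : ∀ j k, 1 ≤ k → ∀ t ∈ dyadicI j k,
      w (j, k) (t + 1) = w (j, k) t * (1 + ηI j * r (j, k) t))
    (hrbound : ∀ t, 1 ≤ t → ∀ I ∈ ACT t, |r I t| ≤ 1)
    (hneg : ∀ t, 1 ≤ t → ∑ I ∈ ACT t, w I t * r I t ≤ 0) (t : ℕ) :
    ∑ I ∈ ACT t, w I (t + 1) / ηI I.1 ≤ (t : ℝ) ^ 2 := by
  induction t with
  | zero =>
    have : ACT 0 = ∅ := Finset.card_eq_zero.1 (Nat.le_zero.1 (card_ACT_le 0))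
    simp [this]
  | succ t ih =>
    refine (potential_step hw_rec (t + 1) (hneg _ (by omega))).trans ?_
    -- an interval active at `t + 1` either was active at `t` or starts at `t + 1` with weight `η`
    rw [← Finset.sum_filter_add_sum_filter_not (ACT (t + 1)) (fun I => I ∈ ACT t)]
    have hold : ∑ I ∈ (ACT (t + 1)).filter (fun I => I ∈ ACT t), w I (t + 1) / ηI I.1
        ≤ ∑ I ∈ ACT t, w I (t + 1) / ηI I.1 := by
      refine Finset.sum_le_sum_of_subset_of_nonneg
        (fun I hI => (Finset.mem_filter.1 hI).2) ?_
      rintro ⟨j, k⟩ hI -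
      obtain ⟨hk, h1, h2⟩ := mem_ACT.1 hI
      exact div_nonneg (weight_pos hw_init hw_rec hrbound j k hk (t + 1) (by omega) (by omega)).le
        (ηI_pos j).le
    have hnew : ∑ I ∈ (ACT (t + 1)).filter (fun I => ¬ I ∈ ACT t), w I (t + 1) / ηI I.1
        ≤ (t : ℝ) + 1 := by
      have hle : ∀ I ∈ (ACT (t + 1)).filter (fun I => ¬ I ∈ ACT t),
          w I (t + 1) / ηI I.1 ≤ 1 := by
        rintro ⟨j, k⟩ hI
        obtain ⟨hI1, hI2⟩ := Finset.mem_filter.1 hI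
        obtain ⟨hk, h1, h2⟩ := mem_ACT.1 hI1
        rw [mem_ACT] at hI2
        have : t + 1 = k * 2 ^ j := by
          by_contra hne
          exact hI2 ⟨hk, by omega, by omega⟩
        rw [this, hw_init j k hk, div_self (ηI_pos j).ne']
      refine (Finset.sum_le_card_nsmul _ _ 1 hle).trans ?_
      rw [nsmul_eq_mul, mul_one]
      exact_mod_cast (Finset.card_filter_le _ _).trans (card_ACT_le (t + 1))
    push_cast
    nlinarith

/-- Regret of the ensemble against the learner of a dyadic interval contained in `[1, s]`. -/
theorem meta_regret
    (hw_init : ∀ j k, 1 ≤ k → w (j, k) (k * 2 ^ j) = ηI j)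
    (hw_rec : ∀ j k, 1 ≤ k → ∀ t ∈ dyadicI j k,
      w (j, k) (t + 1) = w (j, k) t * (1 + ηI j * r (j, k) t))
    (hrbound : ∀ t, 1 ≤ t → ∀ I ∈ ACT t, |r I t| ≤ 1)
    (hneg : ∀ t, 1 ≤ t → ∑ I ∈ ACT t, w I t * r I t ≤ 0)
    (j k s : ℕ) (hk : 1 ≤ k) (hs : (k + 1) * 2 ^ j ≤ s + 1) :
    ∑ t ∈ dyadicI j k, r (j, k) t ≤ 8 * Real.log ((s : ℝ) + 1) * √((2 : ℝ) ^ j) := by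
  have hη := ηI_pos j
  have hp : 1 ≤ 2 ^ j := Nat.one_le_two_pow
  have hkp : 1 ≤ k * 2 ^ j := Nat.mul_pos hk hp
  have hend : (k + 1) * 2 ^ j = k * 2 ^ j + 2 ^ j := by ring
  -- `e` is the last element of the interval
  obtain ⟨e, he⟩ := Nat.exists_eq_add_of_le' (show 1 ≤ (k + 1) * 2 ^ j by omega)
  have hlow := weight_lower hw_init hw_rec hrbound j k hk (2 ^ j) le_rfl
  rw [← hend, ← dyadicI_eq_Ico, he] at hlow
  have hact : (j, k) ∈ ACT e := mem_ACT.2 ⟨hk, by omega, by omega⟩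
  have hsingle : w (j, k) (e + 1) / ηI j ≤ ∑ I ∈ ACT e, w I (e + 1) / ηI I.1 := by
    refine Finset.single_le_sum (f := fun I : ℕ × ℕ => w I (e + 1) / ηI I.1) ?_ hact
    rintro ⟨j', k'⟩ hI
    obtain ⟨hk', h1, h2⟩ := mem_ACT.1 hI
    exact div_nonneg (weight_pos hw_init hw_rec hrbound j' k' hk' (e + 1) (by omega) (by omega)).le
      (ηI_pos j').le
  have hpot := hsingle.trans (potential_le hw_init hw_rec hrbound hneg e)
  rw [div_le_iff₀ hη] at hpot
  set S := ∑ t ∈ dyadicI j k, r (j, k) t with hS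
  have hes : (e : ℝ) ≤ (s : ℝ) + 1 := by
    have : e ≤ s + 1 := by omega
    exact_mod_cast this
  have hexp : Real.exp (ηI j * S - ((2 ^ j : ℕ) : ℝ) * ηI j ^ 2) ≤ ((s : ℝ) + 1) ^ 2 := by
    have h := hlow.trans hpot
    rw [mul_comm] at h
    refine (le_of_mul_le_mul_right h hη).trans ?_
    exact pow_le_pow_left₀ (by positivity) hes 2
  have hlog := (Real.le_log_iff_exp_le (by positivity)).2 hexp
  rw [Real.log_pow] at hlog
  push_cast at hlog
  have hs1 : (2 : ℝ) ≤ (s : ℝ) + 1 := by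
    have : 2 ≤ s + 1 := by omega
    exact_mod_cast this
  have hL : 1 / 2 ≤ Real.log ((s : ℝ) + 1) := by
    have := Real.log_le_log (by norm_num) hs1
    linarith [Real.log_two_gt_d9]
  have h1 := ηI_mul_le j
  have h2 := one_div_ηI_le j
  set L := Real.log ((s : ℝ) + 1)
  set Q := √((2 : ℝ) ^ j)
  have hQ : 0 ≤ Q := Real.sqrt_nonneg _
  -- `η S ≤ 2 L + 2^j η² ≤ η (4 L Q + Q)`, then cancel `η`
  have h3 : ηI j * S ≤ ηI j * (4 * L * Q + Q) := by nlinarith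
  have h4 := le_of_mul_le_mul_left h3 hη
  nlinarith

end Weights

/-- **Theorem 1 (General OCELAD Regret Framework).**
Given convex losses `ℓ_t` on a convex set `Θ ⊆ ℝ^n`, an ensemble of learners on
the dyadic intervals whose dynamic regret on `I` is at most `C(1 + γ(I))√|I|`,
and the OCELAD multiplicative-weight combination `θ̂_t` of the active learners
(with estimated regrets `r_t(I) = ℓ_t(θ̂_t) − ℓ_t(θ_t(I))` assumed to satisfy
`|r_t(I)| ≤ 1`), the ensemble estimate satisfies, on every interval
`I = [q,s] ⊆ [1,T]` and against every comparator sequence in `Θ`,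
`∑_{t∈I} (ℓ_t(θ̂_t) − ℓ_t(θ_t)) ≤ 8C(1 + γ(I))√|I| + 40 ln(s+1) √|I|`. -/
theorem ocelad_strongly_adaptive_dynamic_regret
    (n : ℕ) (hn : 1 ≤ n)
    (Θ : Set (EuclideanSpace ℝ (Fin n))) (hΘ : Convex ℝ Θ)
    (T : ℕ) (hT : 1 ≤ T)
    (ℓ : ℕ → EuclideanSpace ℝ (Fin n) → ℝ)
    (hℓconv : ∀ t, ConvexOn ℝ Θ (ℓ t))
    -- the learners' output sequences, lying in `Θ`
    (θL : ℕ × ℕ → ℕ → EuclideanSpace ℝ (Fin n))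
    (hθL : ∀ j k, 1 ≤ k → ∀ t ∈ dyadicI j k, θL (j, k) t ∈ Θ)
    -- the per-interval dynamic regret bound for the ensemble of learners
    (C : ℝ) (hC : 0 < C)
    (hbase : ∀ j k, 1 ≤ k → ∀ comp : ℕ → EuclideanSpace ℝ (Fin n),
      (∀ t, comp t ∈ Θ) →
      (∑ t ∈ dyadicI j k, (ℓ t (θL (j, k) t) - ℓ t (comp t))) ≤
        C * (1 + ∑ t ∈ dyadicI j k, ‖comp (t + 1) - comp t‖) *
          Real.sqrt ((2 : ℝ) ^ j))
    -- the OCELAD weights, ensemble estimate, and estimated regrets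
    (w : ℕ × ℕ → ℕ → ℝ) (θhat : ℕ → EuclideanSpace ℝ (Fin n))
    (r : ℕ × ℕ → ℕ → ℝ)
    (hθhat : ∀ t, 1 ≤ t →
      θhat t = (∑ I ∈ ACT t, w I t)⁻¹ • ∑ I ∈ ACT t, w I t • θL I t)
    (hr : ∀ I t, r I t = ℓ t (θhat t) - ℓ t (θL I t))
    (hw_init : ∀ j k, 1 ≤ k → w (j, k) (k * 2 ^ j) = ηI j)
    (hw_rec : ∀ j k, 1 ≤ k → ∀ t ∈ dyadicI j k,
      w (j, k) (t + 1) = w (j, k) t * (1 + ηI j * r (j, k) t))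
    -- the estimated regrets are normalized to lie in `[−1, 1]`
    (hrbound : ∀ t, 1 ≤ t → ∀ I ∈ ACT t, |r I t| ≤ 1) :
    ∀ q s : ℕ, 1 ≤ q → q ≤ s → s ≤ T →
      ∀ comp : ℕ → EuclideanSpace ℝ (Fin n), (∀ t, comp t ∈ Θ) →
        (∑ t ∈ Finset.Icc q s, (ℓ t (θhat t) - ℓ t (comp t))) ≤
          8 * C * (1 + ∑ t ∈ Finset.Icc q s, ‖comp (t + 1) - comp t‖) *
              Real.sqrt ((s : ℝ) - q + 1) +
            40 * Real.log ((s : ℝ) + 1) * Real.sqrt ((s : ℝ) - q + 1) := by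
  -- the weighted estimated regrets are nonpositive because `ℓ t` is convex
  have hneg : ∀ t, 1 ≤ t → ∑ I ∈ ACT t, w I t * r I t ≤ 0 := by
    intro t ht
    have hwpos : ∀ I ∈ ACT t, 0 < w I t := by
      rintro ⟨j, k⟩ hI
      obtain ⟨hk, h1, h2⟩ := mem_ACT.1 hI
      exact weight_pos hw_init hw_rec hrbound j k hk t h1 h2.le
    have hne : (ACT t).Nonempty := ⟨(0, t), mem_ACT.2 ⟨ht, by simp, by simp⟩⟩
    have hW : 0 < ∑ I ∈ ACT t, w I t := Finset.sum_pos hwpos hne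
    have hmem : ∀ I ∈ ACT t, θL I t ∈ Θ := by
      rintro ⟨j, k⟩ hI
      obtain ⟨hk, h1, h2⟩ := mem_ACT.1 hI
      exact hθL j k hk t (by rw [dyadicI_eq_Ico, Finset.mem_Ico]; exact ⟨h1, h2⟩)
    have hJ := (hℓconv t).map_centerMass_le (t := ACT t) (w := fun I => w I t)
      (p := fun I => θL I t) (fun I hI => (hwpos I hI).le) hW hmem
    simp only [Finset.centerMass, ← hθhat t ht, Function.comp_apply, smul_eq_mul] at hJ
    rw [inv_mul_eq_div, le_div_iff₀ hW] at hJ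
    simp only [hr, mul_sub, Finset.sum_sub_distrib, ← Finset.sum_mul]
    linarith
  intro q s hq hqs _ comp hcomp
  set γ := ∑ t ∈ Finset.Icc q s, ‖comp (t + 1) - comp t‖ with hγ
  have hγ0 : 0 ≤ γ := Finset.sum_nonneg fun _ _ => norm_nonneg _
  have hlog : 0 ≤ Real.log ((s : ℝ) + 1) := Real.log_nonneg (by simp)
  have hmain := sum_le_of_dyadic (fun t => ℓ t (θhat t) - ℓ t (comp t))
    (C * (1 + γ) + 8 * Real.log ((s : ℝ) + 1)) (by positivity) q s hq hqs (by
      intro j k hk h1 h2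
      have hmeta := meta_regret hw_init hw_rec hrbound hneg j k s hk h2
      have hb := hbase j k hk comp hcomp
      have hsub : ∑ t ∈ dyadicI j k, ‖comp (t + 1) - comp t‖ ≤ γ := by
        refine Finset.sum_le_sum_of_subset_of_nonneg ?_ fun _ _ _ => norm_nonneg _
        intro t ht
        rw [dyadicI_eq_Ico, Finset.mem_Ico] at ht
        rw [Finset.mem_Icc]
        omega
      have hb' : C * (1 + ∑ t ∈ dyadicI j k, ‖comp (t + 1) - comp t‖) * √((2 : ℝ) ^ j)
          ≤ C * (1 + γ) * √((2 : ℝ) ^ j) := by gcongr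
      have hsplit : ∑ t ∈ dyadicI j k, (ℓ t (θhat t) - ℓ t (comp t))
          = ∑ t ∈ dyadicI j k, r (j, k) t
            + ∑ t ∈ dyadicI j k, (ℓ t (θL (j, k) t) - ℓ t (comp t)) := by
        rw [← Finset.sum_add_distrib]
        exact Finset.sum_congr rfl fun t _ => by rw [hr]; ring
      rw [← dyadicI_eq_Ico, hsplit]
      linarith)
  have hx : 0 ≤ C * (1 + γ) * √((s : ℝ) - q + 1) := by positivity
  nlinarith
end

section
/- For any integers 1 ≤ q ≤ s, the interval [q,s] ⊆ ℕ can be partitioned into two finite sequences of disjoint and consecutive intervals (I_{−k}, …, I_0) and (I_1, …, I_p), all belonging to the dyadic interval set 𝓘 and covering [q,s] in left-to-right order, such that |I_{−i}| / |I_{−i+1}| ≤ 1/2 for all i ≥ 1 and |I_i| / |I_{i−1}| ≤ 1/2 for all i ≥ 2. -/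
/-!
The proof halves the interval repeatedly. Write it half-open as `[q, T)` with `T = s + 1`. Peel off
the singleton `{q}` if `q` is odd and the singleton `{T - 1}` if `T` is odd; what is left has even
endpoints, so it is the double of a shorter interval, whose partition exists by induction. Doubling
that partition makes every length at least `2`, so a singleton may be added at either outer end
without breaking the ratio conditions (`HasPartition.double`, `HasPartition.prepend`,
`HasPartition.append`). Nothing is left after peeling when the interval is one point, or two points
starting at an odd number; the latter is handled by one singleton in each of the two sequences,
between which no ratio condition is imposed.
-/

/-- The half-open interval `[q, T)` has a partition of the required kind, in which the intervals
`I_i` with `i ≤ 0` have length at least `2 ^ a` and those with `i ≥ 1` have length at least `2 ^ b`.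
The pair `J i = (j, k)` encodes `[k * 2 ^ j, (k + 1) * 2 ^ j)`, and the ratio conditions are
expressed through the exponents `j`. The two bounds are separate because prepending a singleton
spoils only the first and appending one spoils only the second. -/
def HasPartition (a b q T : ℕ) : Prop :=
  ∃ (m p : ℕ) (J : ℤ → ℕ × ℕ),
    (∀ i : ℤ, -(m : ℤ) ≤ i → i ≤ (p : ℤ) → 1 ≤ (J i).2) ∧
    (J (-(m : ℤ))).2 * 2 ^ (J (-(m : ℤ))).1 = q ∧
    ((J (p : ℤ)).2 + 1) * 2 ^ (J (p : ℤ)).1 = T ∧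
    (∀ i : ℤ, -(m : ℤ) ≤ i → i < (p : ℤ) →
      (J (i + 1)).2 * 2 ^ (J (i + 1)).1 = ((J i).2 + 1) * 2 ^ (J i).1) ∧
    (∀ i : ℤ, -(m : ℤ) ≤ i → i ≤ -1 → (J i).1 < (J (i + 1)).1) ∧
    (∀ i : ℤ, 2 ≤ i → i ≤ (p : ℤ) → (J i).1 < (J (i - 1)).1) ∧
    (∀ i : ℤ, -(m : ℤ) ≤ i → i ≤ 0 → a ≤ (J i).1) ∧
    (∀ i : ℤ, 1 ≤ i → i ≤ (p : ℤ) → b ≤ (J i).1)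

lemma HasPartition.weaken {a b q T : ℕ} (h : HasPartition a b q T) : HasPartition 0 0 q T := by
  obtain ⟨m, p, J, h1, h2, h3, h4, h5, h6, -, -⟩ := h
  exact ⟨m, p, J, h1, h2, h3, h4, h5, h6, fun _ _ _ => Nat.zero_le _, fun _ _ _ => Nat.zero_le _⟩

lemma HasPartition.double {q T : ℕ} (h : HasPartition 0 0 q T) :
    HasPartition 1 1 (2 * q) (2 * T) := by
  obtain ⟨m, p, J, h1, h2, h3, h4, h5, h6, -, -⟩ := h
  refine ⟨m, p, fun i => ((J i).1 + 1, (J i).2), h1, ?_, ?_, ?_, ?_, ?_, ?_, ?_⟩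
  · rw [← h2]; ring
  · rw [← h3]; ring
  · intro i hi hi'
    have := h4 i hi hi'
    simp only [pow_succ, ← mul_assoc, this]
  · intro i hi hi'
    have := h5 i hi hi'
    simpa using this
  · intro i hi hi'
    have := h6 i hi hi'
    simpa using this
  · intro i _ _; simp
  · intro i _ _; simp

lemma HasPartition.prepend {b q T : ℕ} (hq : 1 ≤ q) (h : HasPartition 1 b (q + 1) T) :
    HasPartition 0 b q T := by
  obtain ⟨m, p, J, h1, h2, h3, h4, h5, h6, h7, h8⟩ := h
  let K : ℤ → ℕ × ℕ := fun i => if i = -(m : ℤ) - 1 then (0, q) else J i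
  have hnew : K (-(m : ℤ) - 1) = (0, q) := if_pos rfl
  have hold : ∀ i : ℤ, -(m : ℤ) ≤ i → K i = J i := fun i hi => if_neg (by omega)
  have hm : -((m + 1 : ℕ) : ℤ) = -(m : ℤ) - 1 := by push_cast; ring
  refine ⟨m + 1, p, K, ?_, ?_, ?_, ?_, ?_, ?_, ?_, ?_⟩
  · intro i hi hi'
    obtain rfl | hi : i = -(m : ℤ) - 1 ∨ -(m : ℤ) ≤ i := by omega
    · rw [hnew]; exact hq
    · rw [hold i hi]; exact h1 i hi hi'
  · rw [hm, hnew]; simp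
  · rw [hold p (by omega)]; exact h3
  · intro i hi hi'
    obtain rfl | hi : i = -(m : ℤ) - 1 ∨ -(m : ℤ) ≤ i := by omega
    · rw [hnew, sub_add_cancel, hold _ le_rfl, h2]; simp
    · rw [hold i hi, hold (i + 1) (by omega)]; exact h4 i hi hi'
  · intro i hi hi'
    obtain rfl | hi : i = -(m : ℤ) - 1 ∨ -(m : ℤ) ≤ i := by omega
    · rw [hnew, sub_add_cancel, hold _ le_rfl]; exact h7 _ le_rfl (by omega)
    · rw [hold i hi, hold (i + 1) (by omega)]; exact h5 i hi hi'
  · intro i hi hi'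
    rw [hold i (by omega), hold (i - 1) (by omega)]; exact h6 i hi hi'
  · intro i _ _; exact Nat.zero_le _
  · intro i hi hi'
    rw [hold i (by omega)]; exact h8 i hi hi'

lemma HasPartition.append {a q T : ℕ} (hT : 1 ≤ T) (h : HasPartition a 1 q T) :
    HasPartition a 0 q (T + 1) := by
  obtain ⟨m, p, J, h1, h2, h3, h4, h5, h6, h7, h8⟩ := h
  let K : ℤ → ℕ × ℕ := fun i => if i = (p : ℤ) + 1 then (0, T) else J i
  have hnew : K ((p : ℤ) + 1) = (0, T) := if_pos rfl
  have hold : ∀ i : ℤ, i ≤ (p : ℤ) → K i = J i := fun i hi => if_neg (by omega)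
  have hp : ((p + 1 : ℕ) : ℤ) = (p : ℤ) + 1 := by push_cast; ring
  refine ⟨m, p + 1, K, ?_, ?_, ?_, ?_, ?_, ?_, ?_, ?_⟩
  · intro i hi hi'
    obtain rfl | hi' : i = (p : ℤ) + 1 ∨ i ≤ (p : ℤ) := by omega
    · rw [hnew]; exact hT
    · rw [hold i hi']; exact h1 i hi hi'
  · rw [hold _ (by omega)]; exact h2
  · rw [hp, hnew]; simp
  · intro i hi hi'
    obtain rfl | hi' : i = (p : ℤ) ∨ i < (p : ℤ) := by omega
    · rw [hnew, hold _ le_rfl, h3]; simp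
    · rw [hold i hi'.le, hold (i + 1) (by omega)]; exact h4 i hi hi'
  · intro i hi hi'
    rw [hold i (by omega), hold (i + 1) (by omega)]; exact h5 i hi hi'
  · intro i hi hi'
    obtain rfl | hi' : i = (p : ℤ) + 1 ∨ i ≤ (p : ℤ) := by omega
    · rw [hnew, add_sub_cancel_right, hold _ le_rfl]; exact h8 _ (by omega) le_rfl
    · rw [hold i hi', hold (i - 1) (by omega)]; exact h6 i hi hi'
  · intro i hi hi'
    rw [hold i (by omega)]; exact h7 i hi hi'
  · intro i _ _; exact Nat.zero_le _

lemma HasPartition.singleton {q : ℕ} (hq : 1 ≤ q) (b : ℕ) : HasPartition 0 b q (q + 1) := by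
  refine ⟨0, 0, fun _ => (0, q), fun _ _ _ => hq, by simp, by simp, ?_, ?_, ?_, ?_, ?_⟩ <;>
    intro i _ _ <;> first | exact Nat.zero_le _ | (exfalso; omega)

lemma hasPartition (T : ℕ) : ∀ q : ℕ, 1 ≤ q → q < T → HasPartition 0 0 q T := by
  induction T using Nat.strong_induction_on with
  | _ T ih =>
    intro q hq hqT
    by_cases h1 : T = q + 1
    · subst h1; exact .singleton hq 0
    by_cases h2 : q % 2 = 1 ∧ T = q + 2
    · obtain ⟨-, rfl⟩ := h2
      exact (HasPartition.singleton hq 1).append (by omega)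
    -- the inner interval, from `q` rounded up to even to `T` rounded down to even
    have hD := (ih (T / 2) (by omega) ((q + 1) / 2) (by omega) (by omega)).double
    have hL : T % 2 = 0 ∨ T % 2 = 1 := by omega
    obtain hq2 | hq2 : q % 2 = 0 ∨ q % 2 = 1 := by omega
    · rw [show 2 * ((q + 1) / 2) = q by omega] at hD
      obtain hT | hT := hL
      · rw [show 2 * (T / 2) = T by omega] at hD
        exact hD.weaken
      · have := hD.append (by omega)
        rw [show 2 * (T / 2) + 1 = T by omega] at this
        exact this.weaken
    · rw [show 2 * ((q + 1) / 2) = q + 1 by omega] at hD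
      have hP := hD.prepend hq
      obtain hT | hT := hL
      · rw [show 2 * (T / 2) = T by omega] at hP
        exact hP.weaken
      · have := hP.append (by omega)
        rwa [show 2 * (T / 2) + 1 = T by omega] at this

/-- **Interval partition lemma.**  Any integer interval `[q, s]` with `1 ≤ q ≤ s`
can be partitioned into two finite sequences of disjoint, consecutive dyadic
intervals `(I_{−m}, …, I_0)` and `(I_1, …, I_p)` covering `[q, s]` in
left-to-right order, such that `|I_{−i}|/|I_{−i+1}| ≤ 1/2` for all `i ≥ 1` and
`|I_i|/|I_{i−1}| ≤ 1/2` for all `i ≥ 2`.  Here the interval with index `i`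
(for `−m ≤ i ≤ p`) is `[(J i).2 · 2^(J i).1, ((J i).2 + 1) · 2^(J i).1 − 1]`,
of length `2 ^ (J i).1`. -/
theorem dyadic_interval_partition (q s : ℕ) (hq : 1 ≤ q) (hqs : q ≤ s) :
    ∃ (m p : ℕ) (J : ℤ → ℕ × ℕ),
      -- each member of both sequences is a genuine dyadic interval (`k ≥ 1`)
      (∀ i : ℤ, -(m : ℤ) ≤ i → i ≤ (p : ℤ) → 1 ≤ (J i).2) ∧
      -- the leftmost interval starts at `q`
      (J (-(m : ℤ))).2 * 2 ^ (J (-(m : ℤ))).1 = q ∧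
      -- the rightmost interval ends at `s`
      ((J (p : ℤ)).2 + 1) * 2 ^ (J (p : ℤ)).1 - 1 = s ∧
      -- the intervals are consecutive (hence disjoint and covering `[q, s]`
      -- in left-to-right order)
      (∀ i : ℤ, -(m : ℤ) ≤ i → i < (p : ℤ) →
        (J (i + 1)).2 * 2 ^ (J (i + 1)).1 = ((J i).2 + 1) * 2 ^ (J i).1) ∧
      -- `|I_{−i}| / |I_{−i+1}| ≤ 1/2` for all `i ≥ 1`
      (∀ i : ℤ, -(m : ℤ) ≤ i → i ≤ -1 → 2 * 2 ^ (J i).1 ≤ 2 ^ (J (i + 1)).1) ∧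
      -- `|I_i| / |I_{i−1}| ≤ 1/2` for all `i ≥ 2`
      (∀ i : ℤ, 2 ≤ i → i ≤ (p : ℤ) → 2 * 2 ^ (J i).1 ≤ 2 ^ (J (i - 1)).1) := by
  obtain ⟨m, p, J, h1, h2, h3, h4, h5, h6, -, -⟩ := hasPartition (s + 1) q hq (by omega)
  have key : ∀ {x y : ℕ}, x < y → 2 * 2 ^ x ≤ 2 ^ y := fun {x y} h => by
    rw [← pow_succ']; exact Nat.pow_le_pow_right (by norm_num) h
  exact ⟨m, p, J, h1, h2, by omega, h4, fun i hi hi' => key (h5 i hi hi'),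
    fun i hi hi' => key (h6 i hi hi')⟩
end
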